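/- arXiv:1309.1051 — 3 statements merged into one kernel-verified Lean document; each statement's English description precedes it below -/
import Mathlib

section
/- Let t ≥ 4 and let ⟨u_1, u_2, …, u_t⟩ be a chordless path in a finite undirected simple graph G such that u_1 and u_t lie in the same connected component of the induced subgraph G' = G − (⋃_{i=2}^{t−1} Adj[u_i] − {u_1, u_t}). Then G contains a chordless cycle with at least t vertices. -/
variable {V : Type*}

/-- A simple path: a list of pairwise distinct vertices in which
consecutive vertices are adjacent. -/
def IsSimplePathL (G : SimpleGraph V) (p : List V) : Prop :=
  p.Nodup ∧ p.Chain' G.Adj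

/-- A chordless path: a simple path with no edge between non-consecutive vertices. -/
def IsChordlessPathL (G : SimpleGraph V) (p : List V) : Prop :=
  IsSimplePathL G p ∧
    ∀ i j : Fin p.length, (i : ℕ) + 1 < (j : ℕ) → ¬ G.Adj (p.get i) (p.get j)

/-- A cycle: a simple path ⟨v₁, …, v_k⟩ (k ≥ 3) together with the edge (v_k, v₁). -/
def IsCycleL (G : SimpleGraph V) (p : List V) : Prop :=
  IsSimplePathL G p ∧ 3 ≤ p.length ∧
    ∀ hp : p ≠ [], G.Adj (p.getLast hp) (p.head hp)

/-- A chordless cycle: a cycle whose only edges among its vertices are the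
consecutive ones and the wrap-around edge. -/
def IsChordlessCycleL (G : SimpleGraph V) (p : List V) : Prop :=
  IsCycleL G p ∧
    ∀ i j : Fin p.length, (i : ℕ) < (j : ℕ) → G.Adj (p.get i) (p.get j) →
      (j : ℕ) = (i : ℕ) + 1 ∨ ((i : ℕ) = 0 ∧ (j : ℕ) = p.length - 1)

/-- The subgraph induced on a vertex set `S` (all other vertices become isolated). -/
def inducedOn (G : SimpleGraph V) (S : Set V) : SimpleGraph V where
  Adj a b := G.Adj a b ∧ a ∈ S ∧ b ∈ S
  symm := ⟨fun _ _ h => ⟨h.1.symm, h.2.2, h.2.1⟩⟩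
  loopless := ⟨fun a h => G.loopless.irrefl a h.1⟩

/-- The vertex set of G' = G − (⋃_{i=2}^{t-1} Adj[u_i] − {u₁, u_t}) for the
path p = ⟨u₁, …, u_t⟩: a vertex is kept iff it is u₁ or u_t, or it lies outside
the closed neighborhood of every interior vertex of p. -/
def keptSet (G : SimpleGraph V) (p : List V) : Set V :=
  {v | (∃ hp : p ≠ [], v = p.head hp ∨ v = p.getLast hp) ∨
       ∀ i : Fin p.length, 1 ≤ (i : ℕ) → (i : ℕ) + 1 < p.length →
         v ≠ p.get i ∧ ¬ G.Adj (p.get i) v}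

/-!
A shortest path of `G'` from `u_t` back to `u₁` is chordless in `G'`, hence in `G`, because `G'` is
an induced subgraph. Its interior vertices are neither equal nor adjacent to an interior vertex of
the given path, so every edge between two vertices of the closed walk formed by the two paths joins
vertices of the same path, and is therefore an edge of that path. Since `u₁` and `u_t` are not
adjacent, the second path has an interior vertex, so the cycle is strictly longer than `t`.
-/

variable {G : SimpleGraph V}

theorem exists_eq_cons_append_singleton {p : List V} (hp : 2 ≤ p.length) :
    ∃ a s b, p = a :: (s ++ [b]) := by
  match p, hp with
  | a :: x :: l, _ =>
    exact ⟨a, (x :: l).dropLast, (x :: l).getLast (by simp), by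
      rw [List.dropLast_append_getLast]⟩

theorem IsChordlessPathL.nodup {p : List V} (hp : IsChordlessPathL G p) : p.Nodup :=
  hp.1.1

theorem IsChordlessPathL.adj_getElem_iff {p : List V} (hp : IsChordlessPathL G p) {i j : ℕ}
    (hij : i < j) (hj : j < p.length) : G.Adj p[i] p[j] ↔ j = i + 1 := by
  constructor
  · intro hadj
    by_contra hne
    exact hp.2 ⟨i, by omega⟩ ⟨j, hj⟩ (show i + 1 < j by omega) hadj
  · rintro rfl
    exact List.IsChain.getElem hp.1.2 i hj

theorem isChordlessCycleL_of_nodup_of_adj_iff {p : List V} (hnodup : p.Nodup)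
    (hlen : 3 ≤ p.length)
    (hadj : ∀ (i j : ℕ) (_ : i < j) (_ : j < p.length),
      G.Adj p[i] p[j] ↔ j = i + 1 ∨ i = 0 ∧ j = p.length - 1) :
    IsChordlessCycleL G p := by
  refine ⟨⟨⟨hnodup, List.isChain_iff_getElem.2 fun i hi => ?_⟩, hlen, fun hp => ?_⟩,
    fun i j hij => (hadj i j hij j.2).1⟩
  · exact (hadj i (i + 1) i.lt_succ_self hi).2 (.inl rfl)
  · rw [List.getLast_eq_getElem, List.head_eq_getElem]
    exact ((hadj 0 (p.length - 1) (by omega) (by omega)).2 (.inr ⟨rfl, rfl⟩)).symm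

section ClosingPath

variable {a b : V} {s q : List V}

theorem getElem_cons_append_cons_left (k : ℕ) (hk : k < s.length + 2) :
    (a :: (s ++ b :: q))[k]'(by grind) = (a :: (s ++ [b]))[k]'(by grind) := by
  grind

theorem getElem_cons_append_cons_right (k : ℕ) (hk : k < q.length + 1) :
    (a :: (s ++ b :: q))[s.length + 1 + k]'(by grind) = (b :: (q ++ [a]))[k]'(by grind) := by
  grind

theorem getElem_zero_cons_append_cons :
    (a :: (s ++ b :: q))[0] = (b :: (q ++ [a]))[q.length + 1]'(by simp) := by
  simp

theorem getElem_cons_append_cons_mem_left (k : ℕ) (hk_pos : 0 < k) (hk : k < s.length + 1) :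
    (a :: (s ++ b :: q))[k]'(by grind) ∈ s := by
  grind

theorem getElem_cons_append_cons_mem_right (k : ℕ) (hk_pos : 0 < k) (hk : k < q.length + 1) :
    (a :: (s ++ b :: q))[s.length + 1 + k]'(by grind) ∈ q := by
  grind

theorem IsChordlessPathL.ne_nil_of_closing (hs : IsChordlessPathL G (a :: (s ++ [b])))
    (hs_ne : s ≠ []) (hq : IsChordlessPathL G (b :: (q ++ [a]))) : q ≠ [] := by
  rintro rfl
  have hs_pos := List.length_pos_of_ne_nil hs_ne
  have hba : G.Adj b a := (hq.adj_getElem_iff zero_lt_one (by simp)).2 rfl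
  have hlast : s.length + 1 = 0 + 1 :=
    (hs.adj_getElem_iff s.length.succ_pos (by simp)).1 (by simpa using hba.symm)
  omega

theorem nodup_cons_append_cons (hs : (a :: (s ++ [b])).Nodup) (hq : (b :: (q ++ [a])).Nodup)
    (hdisj : s.Disjoint q) : (a :: (s ++ b :: q)).Nodup := by
  grind [List.Disjoint]

theorem IsChordlessPathL.adj_cons_append_cons_iff (hs : IsChordlessPathL G (a :: (s ++ [b])))
    (hs_ne : s ≠ []) (hq : IsChordlessPathL G (b :: (q ++ [a])))
    (hnadj : ∀ v ∈ q, ∀ x ∈ s, ¬ G.Adj x v) {i j : ℕ} (hij : i < j)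
    (hj : j < (a :: (s ++ b :: q)).length) :
    G.Adj (a :: (s ++ b :: q))[i] (a :: (s ++ b :: q))[j] ↔
      j = i + 1 ∨ i = 0 ∧ j = (a :: (s ++ b :: q)).length - 1 := by
  have hs_pos := List.length_pos_of_ne_nil hs_ne
  have hq_pos := List.length_pos_of_ne_nil (hs.ne_nil_of_closing hs_ne hq)
  simp only [List.length_cons, List.length_append] at hj ⊢
  obtain hj_left | hj_right : j < s.length + 2 ∨ s.length + 2 ≤ j := by omega
  · rw [getElem_cons_append_cons_left i (by omega), getElem_cons_append_cons_left j hj_left,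
      hs.adj_getElem_iff hij]
    omega
  obtain ⟨l, rfl⟩ : ∃ l, j = s.length + 1 + l := ⟨j - (s.length + 1), by omega⟩
  obtain rfl | ⟨hi_pos, hi_interior⟩ | hi_right :
      i = 0 ∨ (0 < i ∧ i < s.length + 1) ∨ s.length + 1 ≤ i := by omega
  · rw [getElem_zero_cons_append_cons, getElem_cons_append_cons_right l (by omega), G.adj_comm,
      hq.adj_getElem_iff (by omega)]
    omega
  · have hcross : ¬ G.Adj (a :: (s ++ b :: q))[i] (a :: (s ++ b :: q))[s.length + 1 + l] :=
      hnadj _ (getElem_cons_append_cons_mem_right l (by omega) (by omega))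
        _ (getElem_cons_append_cons_mem_left i hi_pos hi_interior)
    rw [iff_false_left hcross]
    omega
  · obtain ⟨k, rfl⟩ : ∃ k, i = s.length + 1 + k := ⟨i - (s.length + 1), by omega⟩
    rw [getElem_cons_append_cons_right k (by omega), getElem_cons_append_cons_right l (by omega),
      hq.adj_getElem_iff (by omega)]
    omega

theorem IsChordlessPathL.isChordlessCycleL_cons_append_cons
    (hs : IsChordlessPathL G (a :: (s ++ [b])))
    (hs_ne : s ≠ []) (hq : IsChordlessPathL G (b :: (q ++ [a])))
    (hfar : ∀ v ∈ q, ∀ x ∈ s, v ≠ x ∧ ¬ G.Adj x v) :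
    IsChordlessCycleL G (a :: (s ++ b :: q)) := by
  have hs_pos := List.length_pos_of_ne_nil hs_ne
  refine isChordlessCycleL_of_nodup_of_adj_iff ?_ (by simp; omega) fun i j hij hj =>
    hs.adj_cons_append_cons_iff hs_ne hq (fun v hv x hx => (hfar v hv x hx).2) hij hj
  exact nodup_cons_append_cons hs.nodup hq.nodup fun x hxs hxq => (hfar x hxq x hxs).1 rfl

end ClosingPath

section ShortestPath

variable {S : Set V} {a b : V}

theorem isChordlessPathL_support_of_length_eq_dist (w : G.Walk a b)
    (hw : w.length = G.dist a b) : IsChordlessPathL G w.support := by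
  refine ⟨⟨(w.isPath_of_length_eq_dist hw).support_nodup, w.isChain_adj_support⟩,
    fun i j hij hadj => ?_⟩
  have hi : i < w.length + 1 := w.length_support ▸ i.2
  have hj : j < w.length + 1 := w.length_support ▸ j.2
  rw [List.get_eq_getElem, List.get_eq_getElem, w.support_getElem_eq_getVert (by omega),
    w.support_getElem_eq_getVert (by omega)] at hadj
  have hshort := G.dist_le ((w.take i).append (.cons hadj (w.drop j)))
  simp only [SimpleGraph.Walk.length_append, SimpleGraph.Walk.length_cons,
    SimpleGraph.Walk.take_length, SimpleGraph.Walk.drop_length] at hshort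
  omega

theorem mem_of_mem_support_inducedOn (w : (inducedOn G S).Walk a b) (ha : a ∈ S) :
    ∀ v ∈ w.support, v ∈ S := by
  induction w with
  | nil => simpa using ha
  | cons hadj _ ih => simpa [ha] using ih hadj.2.2

theorem IsChordlessPathL.of_inducedOn {p : List V} (hp : IsChordlessPathL (inducedOn G S) p)
    (hpS : ∀ v ∈ p, v ∈ S) : IsChordlessPathL G p := by
  refine ⟨⟨hp.nodup, List.IsChain.imp (fun _ _ h => h.1) hp.1.2⟩, fun i j hij hadj => ?_⟩
  exact hp.2 i j hij ⟨hadj, hpS _ (p.get_mem i), hpS _ (p.get_mem j)⟩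

theorem exists_isChordlessPathL_of_reachable_inducedOn (ha : a ∈ S) (hab : a ≠ b)
    (h : (inducedOn G S).Reachable a b) :
    ∃ q, IsChordlessPathL G (a :: (q ++ [b])) ∧ ∀ v ∈ q, v ∈ S := by
  obtain ⟨w, hw⟩ := h.exists_walk_length_eq_dist
  have hwS := mem_of_mem_support_inducedOn w ha
  have hchordless := (isChordlessPathL_support_of_length_eq_dist w hw).of_inducedOn hwS
  have hw_length : w.length ≠ 0 := fun h0 => hab (w.eq_of_length_eq_zero h0)
  obtain ⟨a', q, b', hsupport⟩ := exists_eq_cons_append_singleton (p := w.support)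
    (by rw [w.length_support]; omega)
  obtain rfl : a = a' := by simpa [hsupport] using w.head_support.symm
  obtain rfl : b = b' := by simpa [hsupport] using w.getLast_support.symm
  rw [hsupport] at hchordless hwS
  exact ⟨q, hchordless, fun v hv => hwS v (by simp [hv])⟩

end ShortestPath

theorem mem_keptSet_cons_append_singleton {a b v : V} {s : List V} :
    v ∈ keptSet G (a :: (s ++ [b])) ↔
      v = a ∨ v = b ∨ ∀ x ∈ s, v ≠ x ∧ ¬ G.Adj x v := by
  have interior_iff :
      (∀ i : Fin (a :: (s ++ [b])).length, 1 ≤ (i : ℕ) → (i : ℕ) + 1 < (a :: (s ++ [b])).length →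
        v ≠ (a :: (s ++ [b])).get i ∧ ¬ G.Adj ((a :: (s ++ [b])).get i) v) ↔
      ∀ x ∈ s, v ≠ x ∧ ¬ G.Adj x v := by
    rw [List.forall_mem_iff_getElem]
    constructor
    · intro h k hk
      simpa [hk] using h ⟨k + 1, by grind⟩ (by simp) (by simpa using hk)
    · rintro h ⟨i, hi⟩ hi_pos hi_lt
      obtain ⟨k, rfl⟩ : ∃ k, i = k + 1 := ⟨i - 1, by grind⟩
      have hk : k < s.length := by simpa using hi_lt
      simpa [hk] using h k hk
  simp [keptSet, ← interior_iff, or_assoc]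

theorem stmt1_general (G : SimpleGraph V) {p : List V} (hlen : 3 ≤ p.length)
    (hp : IsChordlessPathL G p)
    (hreach : (inducedOn G (keptSet G p)).Reachable
      (p.head (List.ne_nil_of_length_pos (by omega)))
      (p.getLast (List.ne_nil_of_length_pos (by omega)))) :
    ∃ c : List V, p.length < c.length ∧ IsChordlessCycleL G c := by
  obtain ⟨a, s, b, rfl⟩ := exists_eq_cons_append_singleton (by omega : 2 ≤ p.length)
  have hs_ne : s ≠ [] := by rintro rfl; simp at hlen
  have hnodup : (a :: (s ++ [b])).Nodup := hp.nodup
  replace hreach : (inducedOn G (keptSet G (a :: (s ++ [b])))).Reachable b a := by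
    simpa using hreach.symm
  obtain ⟨q, hq, hq_kept⟩ := exists_isChordlessPathL_of_reachable_inducedOn
    (mem_keptSet_cons_append_singleton.2 (.inr (.inl rfl))) (by rintro rfl; simp at hnodup) hreach
  have hfar : ∀ v ∈ q, ∀ x ∈ s, v ≠ x ∧ ¬ G.Adj x v := by
    intro v hv
    have hq_nodup : (b :: (q ++ [a])).Nodup := hq.nodup
    obtain rfl | rfl | hv_far := mem_keptSet_cons_append_singleton.1 (hq_kept v hv)
    · grind
    · grind
    · exact hv_far
  have hq_pos := List.length_pos_of_ne_nil (hp.ne_nil_of_closing hs_ne hq)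
  exact ⟨a :: (s ++ b :: q), by simpa using hq_pos,
    hp.isChordlessCycleL_cons_append_cons hs_ne hq hfar⟩

/-- Let t ≥ 4 and let ⟨u₁, …, u_t⟩ be a chordless path in a finite
undirected simple graph G such that u₁ and u_t lie in the same connected
component of G' = G − (⋃_{i=2}^{t-1} Adj[u_i] − {u₁, u_t}). Then G contains a
chordless cycle with at least t vertices. -/
theorem stmt1 {V : Type*} [Fintype V] (G : SimpleGraph V) (t : ℕ) (ht : 4 ≤ t)
    (p : List V) (hl : p.length = t) (hp : IsChordlessPathL G p)
    (hreach : (inducedOn G (keptSet G p)).Reachable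
      (p.head (by intro h; rw [h] at hl; simp at hl; omega))
      (p.getLast (by intro h; rw [h] at hl; simp at hl; omega))) :
    ∃ c : List V, t ≤ c.length ∧ IsChordlessCycleL G c := by
  obtain ⟨c, hlen, hc⟩ := stmt1_general G (by omega) hp hreach
  exact ⟨c, by omega, hc⟩
end

section
/- Let p = ⟨v_1, v_2, …, v_k⟩ be a chordless path in a finite undirected simple graph G and let v ∈ Adj(v_k) with v ≠ v_{k−1}. Suppose (v_{k−1}, v) ∉ E and ⟨v_1, …, v_k, v⟩ is not a chordless path. Then there exists an index i ∈ {1, …, k−2} with (v, v_i) ∈ E, and for the largest such index i the sequence ⟨v_i, v_{i+1}, …, v_k, v⟩ is a chordless cycle in G. -/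
variable {V : Type*}

/-!
The path is chordless, so the only vertex of it adjacent to `v_k` is `v_{k-1}`; hence `v` is a new
vertex and every chord of `⟨v_1, …, v_k, v⟩` ends at `v`. Cutting the path at the last chord leaves
no chord at all, and that edge closes the remainder to a cycle.
-/

variable {G : SimpleGraph V} {p : List V} {v : V}

theorem IsSimplePathL.drop (hp : IsSimplePathL G p) (n : ℕ) : IsSimplePathL G (p.drop n) :=
  ⟨hp.1.sublist (p.drop_sublist n), List.IsChain.drop hp.2 n⟩

theorem IsSimplePathL.append_singleton (hp : IsSimplePathL G p) (hv : v ∉ p) (hnil : p ≠ [])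
    (hlast : G.Adj (p.getLast hnil) v) : IsSimplePathL G (p ++ [v]) := by
  refine ⟨List.nodup_append_comm.1 (List.nodup_cons.2 ⟨hv, hp.1⟩),
    List.isChain_append.2 ⟨hp.2, List.isChain_singleton v, ?_⟩⟩
  simpa [List.getLast?_eq_some_getLast hnil] using hlast

theorem adj_get_append_singleton {i j : Fin (p ++ [v]).length} (hij : (i : ℕ) < j)
    (hadj : G.Adj ((p ++ [v]).get i) ((p ++ [v]).get j)) :
    (∃ hj : (j : ℕ) < p.length, G.Adj p[i] p[j]) ∨
      (j : ℕ) = p.length ∧ ∃ hi : (i : ℕ) < p.length, G.Adj p[i] v := by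
  grind

namespace IsChordlessPathL

theorem eq_add_one_of_adj (hp : IsChordlessPathL G p) {i j : ℕ} (hi : i < p.length)
    (hj : j < p.length) (hij : i < j) (hadj : G.Adj p[i] p[j]) : j = i + 1 := by
  by_contra hne
  exact hp.2 ⟨i, hi⟩ ⟨j, hj⟩ (by grind) hadj

theorem drop (hp : IsChordlessPathL G p) (n : ℕ) : IsChordlessPathL G (p.drop n) := by
  refine ⟨hp.1.drop n, fun i j hij hadj => ?_⟩
  simp only [List.get_eq_getElem, List.getElem_drop] at hadj
  have := hp.eq_add_one_of_adj _ _ (by omega) hadj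
  omega

-- For a one-vertex path the truncated index is `0`, but then `hlast` would be a loop.
theorem eq_getElem_of_adj_getLast (hp : IsChordlessPathL G p) (hv : v ∈ p) (hnil : p ≠ [])
    (hlast : G.Adj (p.getLast hnil) v) :
    v = p[p.length - 2]'(by grind) := by
  obtain ⟨i, hi, rfl⟩ := List.getElem_of_mem hv
  rw [List.getLast_eq_getElem] at hlast
  have hi_ne : i ≠ p.length - 1 := by
    rintro rfl
    exact hlast.ne rfl
  have := hp.eq_add_one_of_adj hi _ (by omega) hlast.symm
  congr 1
  omega

theorem append_singleton (hp : IsChordlessPathL G p) (hv : v ∉ p) (hnil : p ≠ [])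
    (hlast : G.Adj (p.getLast hnil) v)
    (hchord : ∀ (i : ℕ) (_ : i + 1 < p.length), ¬ G.Adj v p[i]) :
    IsChordlessPathL G (p ++ [v]) := by
  refine ⟨hp.1.append_singleton hv hnil hlast, fun i j hij hadj => ?_⟩
  obtain ⟨hj, hadj⟩ | ⟨hj, _, hadj⟩ := adj_get_append_singleton (by omega) hadj
  · have := hp.eq_add_one_of_adj _ hj (by omega) hadj
    omega
  · exact hchord i (by omega) hadj.symm

theorem isChordlessCycleL_append_singleton (hp : IsChordlessPathL G p) (hv : v ∉ p)
    (hlen : 2 ≤ p.length) (hnil : p ≠ []) (hlast : G.Adj (p.getLast hnil) v)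
    (hhead : G.Adj v (p.head hnil))
    (hchord : ∀ (i : ℕ) (_ : i + 1 < p.length), G.Adj v p[i] → i = 0) :
    IsChordlessCycleL G (p ++ [v]) := by
  refine ⟨⟨hp.1.append_singleton hv hnil hlast, by grind, fun _ => ?_⟩, fun i j hij hadj => ?_⟩
  · simpa only [List.getLast_append_singleton, List.head_append_of_ne_nil hnil] using hhead
  · obtain ⟨hj, hadj⟩ | ⟨hj, _, hadj⟩ := adj_get_append_singleton hij hadj
    · exact Or.inl (hp.eq_add_one_of_adj _ hj hij hadj)
    · obtain hi | hi := (show (i : ℕ) + 1 ≤ p.length by omega).lt_or_eq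
      · exact Or.inr ⟨hchord i hi hadj.symm, by grind⟩
      · exact Or.inl (hj.trans hi.symm)

theorem isChordlessCycleL_drop_append_singleton (hp : IsChordlessPathL G p) (hv : v ∉ p)
    (hnil : p ≠ []) (hlast : G.Adj (p.getLast hnil) v) {i : ℕ} (hi : i + 1 < p.length)
    (hadj : G.Adj v p[i])
    (hmax : ∀ (j : ℕ) (_ : j + 1 < p.length), G.Adj v p[j] → j ≤ i) :
    IsChordlessCycleL G (p.drop i ++ [v]) := by
  have hdrop : p.drop i ≠ [] := List.drop_eq_nil_iff.not.2 (by omega)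
  refine (hp.drop i).isChordlessCycleL_append_singleton (fun h => hv (List.mem_of_mem_drop h))
    (by grind) hdrop ?_ ?_ fun j hj hvj => ?_
  · rwa [List.getLast_drop]
  · rwa [List.head_drop]
  · rw [List.getElem_drop] at hvj
    have := hmax (i + j) (by grind) hvj
    omega

end IsChordlessPathL

theorem stmt8_general (hk : 1 < p.length) (hp : IsChordlessPathL G p)
    (hadj : G.Adj p[p.length - 1] v) (hne : v ≠ p[p.length - 2])
    (hnadj : ¬ G.Adj p[p.length - 2] v) (hnotcp : ¬ IsChordlessPathL G (p ++ [v])) :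
    (∃ j : Fin p.length, (j : ℕ) + 3 ≤ p.length ∧ G.Adj v p[j]) ∧
    (∀ j : Fin p.length, (j : ℕ) + 3 ≤ p.length → G.Adj v p[j] →
      (∀ j' : Fin p.length, (j' : ℕ) + 3 ≤ p.length → G.Adj v p[j'] → (j' : ℕ) ≤ (j : ℕ)) →
      IsChordlessCycleL G (p.drop (j : ℕ) ++ [v])) := by
  have hnil : p ≠ [] := List.ne_nil_of_length_pos (by omega)
  have hlast : G.Adj (p.getLast hnil) v := by rwa [List.getLast_eq_getElem]
  have hv : v ∉ p := fun h => hne (hp.eq_getElem_of_adj_getLast h hnil hlast)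
  have hfar (i : ℕ) (hi : i + 1 < p.length) (hvi : G.Adj v p[i]) : i + 3 ≤ p.length := by
    have hi_ne : i ≠ p.length - 2 := by
      rintro rfl
      exact hnadj hvi.symm
    omega
  constructor
  · by_contra! hnone
    exact hnotcp (hp.append_singleton hv hnil hlast fun i hi hvi =>
      hnone ⟨i, by omega⟩ (hfar i hi hvi) hvi)
  · exact fun j hj hvj hmax =>
      hp.isChordlessCycleL_drop_append_singleton hv hnil hlast (by omega) hvj fun i hi hvi =>
        hmax ⟨i, by omega⟩ (hfar i hi hvi) hvi

/-- Let p = ⟨v₁, …, v_k⟩ be a chordless path and v ∈ Adj(v_k) with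
v ≠ v_{k-1}. Suppose (v_{k-1}, v) ∉ E and ⟨v₁, …, v_k, v⟩ is not a chordless
path. Then there is an index i ∈ {1, …, k-2} (0-indexed: j with j + 3 ≤ k) with
(v, v_i) ∈ E, and for the largest such index, ⟨v_i, v_{i+1}, …, v_k, v⟩ is a
chordless cycle in G. -/
theorem stmt8 {V : Type*} [Fintype V] (G : SimpleGraph V) (p : List V)
    (hk : 2 ≤ p.length) (hp : IsChordlessPathL G p) (v : V)
    (hadj : G.Adj (p.get ⟨p.length - 1, by omega⟩) v)
    (hne : v ≠ p.get ⟨p.length - 2, by omega⟩)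
    (hnadj : ¬ G.Adj (p.get ⟨p.length - 2, by omega⟩) v)
    (hnotcp : ¬ IsChordlessPathL G (p ++ [v])) :
    (∃ j : Fin p.length, (j : ℕ) + 3 ≤ p.length ∧ G.Adj v (p.get j)) ∧
    (∀ j : Fin p.length, (j : ℕ) + 3 ≤ p.length → G.Adj v (p.get j) →
      (∀ j' : Fin p.length, (j' : ℕ) + 3 ≤ p.length → G.Adj v (p.get j') →
        (j' : ℕ) ≤ (j : ℕ)) →
      IsChordlessCycleL G (p.drop (j : ℕ) ++ [v])) :=
  stmt8_general hk hp hadj hne hnadj hnotcp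
end

section
/- Let G be a finite undirected simple graph with n vertices and ℓ : V → {1, 2, …, n} a vertex labeling. Every chordless cycle C = ⟨u_1, u_2, …, u_k⟩ in G with k ≥ 4 admits a representation (obtained by a cyclic rotation possibly followed by a reversal) ⟨w_1, w_2, …, w_k⟩ such that ℓ(w_2) = min{ℓ(u_i) | i = 1, …, k}, ℓ(w_1) < ℓ(w_3), and the initial triplet ⟨w_1, w_2, w_3⟩ belongs to T(G), i.e., w_1, w_3 ∈ Adj(w_2), ℓ(w_2) < ℓ(w_1) < ℓ(w_3), and (w_1, w_3) ∉ E. -/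
variable {V : Type*}

/-!
Rotate the cycle so that its vertex `u` of minimum label comes second, between its two neighbours
`x` and `y` on the cycle. Since `k ≥ 4`, the edge `xy` would be a chord, so `x` and `y` are not
adjacent, and up to reversing the cycle `x` has the smaller label of the two.
-/

section Lists

variable {β : Type*}

theorem exists_isRotated_cons_cons_cons {p : List β} {u : β} (hu : u ∈ p) (hp : 3 ≤ p.length) :
    ∃ x y r, p ~r x :: u :: y :: r := by
  obtain ⟨s, t, rfl⟩ := List.append_of_mem hu
  have hts : 2 ≤ (t ++ s).length := by
    simp only [List.length_append, List.length_cons] at hp ⊢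
    omega
  obtain ⟨y, m, hm⟩ := List.exists_cons_of_length_pos (show 0 < (t ++ s).length by omega)
  have hm_ne : m ≠ [] := by
    rintro rfl
    simp [hm] at hts
  obtain ⟨r, x, rfl⟩ := (List.eq_nil_or_concat' m).resolve_left hm_ne
  refine ⟨x, y, r, ?_⟩
  have hrot : s ++ u :: t ~r u :: y :: r ++ [x] := by
    simpa [hm] using List.isRotated_append (l := s) (l' := u :: t)
  exact hrot.trans List.isRotated_append

theorem reverse_rotate_three_cons (x u y : β) (r : List β) :
    ((x :: u :: y :: r).rotate 3).reverse = y :: u :: x :: r.reverse := by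
  simp [List.rotate_cons_succ]

end Lists

/-- The triplet `⟨x, u, y⟩` belongs to the set `T(G)` of initial valid triplets. The labels may lie
in any ordered type. -/
def IsInitialTriplet {α : Type*} [LT α] (G : SimpleGraph V) (ℓ : V → α) (x u y : V) : Prop :=
  G.Adj u x ∧ G.Adj u y ∧ ℓ u < ℓ x ∧ ℓ x < ℓ y ∧ ¬ G.Adj x y

section ChordlessCycles

variable {G : SimpleGraph V} {p q r : List V} {x u y : V}

theorem IsCycleL.append_singleton (h : IsCycleL G (x :: p)) : IsCycleL G (p ++ [x]) := by
  obtain ⟨⟨hnodup, hchain⟩, hlen, hwrap⟩ := h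
  have hp : p ≠ [] := by
    rintro rfl
    simp at hlen
  have hlast : G.Adj (p.getLast hp) x := by
    simpa only [List.getLast_cons hp, List.head_cons] using hwrap (List.cons_ne_nil x p)
  obtain ⟨hhead, hchain⟩ := List.isChain_cons.1 hchain
  refine ⟨⟨?_, ?_⟩, by simpa using hlen, fun _ => ?_⟩
  · exact (List.perm_append_singleton x p).nodup_iff.2 hnodup
  · exact hchain.append (List.isChain_singleton x) (by simp_all [List.getLast?_eq_some_getLast])
  · simpa [List.head_append_of_ne_nil hp] using
      hhead (p.head hp) (by simp [List.head?_eq_some_head hp])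

theorem IsChordlessCycleL.append_singleton (h : IsChordlessCycleL G (x :: p)) :
    IsChordlessCycleL G (p ++ [x]) := by
  refine ⟨h.1.append_singleton, ?_⟩
  rintro ⟨i, hi⟩ ⟨j, hj⟩ (hij : i < j) hadj
  simp only [List.length_append, List.length_singleton] at hi hj
  have hip : i < p.length := by omega
  rcases Nat.lt_succ_iff_lt_or_eq.1 hj with hjp | rfl
  · have hsucc := h.2 ⟨i + 1, by simpa⟩ ⟨j + 1, by simpa⟩ (by simpa)
      (by simpa [hip, hjp] using hadj)
    simp only [List.length_append, List.length_cons] at hsucc ⊢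
    omega
  · have hsucc := h.2 ⟨0, by simp⟩ ⟨i + 1, by simpa⟩ (by simp)
      (by simpa [hip] using hadj.symm)
    simp only [List.length_append, List.length_cons, List.length_nil] at hsucc ⊢
    omega

theorem IsChordlessCycleL.isRotated (h : IsChordlessCycleL G p) (hpq : p ~r q) :
    IsChordlessCycleL G q := by
  obtain ⟨n, rfl⟩ := hpq
  induction n generalizing p with
  | zero => simpa using h
  | succ n ih =>
    cases p with
    | nil => simpa using h
    | cons x t => exact List.rotate_cons_succ t x n ▸ ih h.append_singleton

theorem IsCycleL.adj_adj_of_cons_cons_cons (h : IsCycleL G (x :: u :: y :: r)) :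
    G.Adj x u ∧ G.Adj u y := by
  obtain ⟨hxu, huy⟩ := List.isChain_cons_cons.1 h.1.2
  exact ⟨hxu, huy.rel⟩

theorem IsChordlessCycleL.not_adj_of_cons_cons_cons (h : IsChordlessCycleL G (x :: u :: y :: r))
    (hr : r ≠ []) : ¬ G.Adj x y := by
  intro hxy
  have hrpos := List.length_pos_of_ne_nil hr
  have hcons := h.2 ⟨0, by simp⟩ ⟨2, by simp⟩ (by simp) hxy
  simp only [List.length_cons] at hcons
  omega

theorem IsChordlessCycleL.isInitialTriplet_or_isInitialTriplet {α : Type*} [LinearOrder α]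
    {ℓ : V → α} (h : IsChordlessCycleL G (x :: u :: y :: r)) (hr : r ≠ [])
    (hℓ : Set.InjOn ℓ {v | v ∈ x :: u :: y :: r})
    (hmin : ∀ v ∈ x :: u :: y :: r, ℓ u ≤ ℓ v) :
    IsInitialTriplet G ℓ x u y ∨ IsInitialTriplet G ℓ y u x := by
  obtain ⟨hxu, huy⟩ := h.1.adj_adj_of_cons_cons_cons
  have hxy : ¬ G.Adj x y := h.not_adj_of_cons_cons_cons hr
  have hux_lt : ℓ u < ℓ x := (hmin x (by simp)).lt_of_ne (hℓ.ne (by simp) (by simp) hxu.ne')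
  have huy_lt : ℓ u < ℓ y := (hmin y (by simp)).lt_of_ne (hℓ.ne (by simp) (by simp) huy.ne)
  have hxy_ne : x ≠ y := by
    have hnodup := h.1.1.1
    simp_all
  rcases (hℓ.ne (by simp) (by simp) hxy_ne).lt_or_gt with hlt | hlt
  · exact Or.inl ⟨hxu.symm, huy, hux_lt, hlt, hxy⟩
  · exact Or.inr ⟨huy, hxu.symm, huy_lt, hlt, fun hyx => hxy hyx.symm⟩

end ChordlessCycles

theorem stmt9_general {V α : Type*} [LinearOrder α] (G : SimpleGraph V) (ℓ : V → α) (p : List V)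
    (hℓ : Set.InjOn ℓ {v | v ∈ p}) (hk : 4 ≤ p.length) (hcc : IsChordlessCycleL G p) :
    ∃ x u y r, (∃ i, x :: u :: y :: r = p.rotate i ∨ x :: u :: y :: r = (p.rotate i).reverse) ∧
      (∀ v ∈ p, ℓ u ≤ ℓ v) ∧ IsInitialTriplet G ℓ x u y := by
  obtain ⟨u, hu, hmin⟩ := Set.exists_min_image {v | v ∈ p} ℓ (List.finite_toSet p)
    (List.exists_mem_of_length_pos (by omega))
  obtain ⟨x, y, r, hrot⟩ := exists_isRotated_cons_cons_cons hu (by omega)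
  have hr : r ≠ [] := by
    rintro rfl
    simp [hrot.perm.length_eq] at hk
  simp only [hrot.mem_iff] at hℓ
  rcases (hcc.isRotated hrot).isInitialTriplet_or_isInitialTriplet hr hℓ
    fun v hv => hmin v (hrot.mem_iff.2 hv) with htriplet | htriplet
  · obtain ⟨i, hi⟩ := hrot
    exact ⟨x, u, y, r, ⟨i, Or.inl hi.symm⟩, hmin, htriplet⟩
  · obtain ⟨i, hi⟩ := hrot
    refine ⟨y, u, x, r.reverse, ⟨i + 3, Or.inr ?_⟩, hmin, htriplet⟩
    rw [← List.rotate_rotate, hi, reverse_rotate_three_cons]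

/-- Every chordless cycle C = ⟨u₁, …, u_k⟩ with k ≥ 4 admits a
representation ⟨w₁, …, w_k⟩ (a cyclic rotation possibly followed by a reversal)
such that ℓ(w₂) is the minimum label on the cycle, ℓ(w₁) < ℓ(w₃), and the
initial triplet ⟨w₁, w₂, w₃⟩ belongs to T(G): w₁, w₃ ∈ Adj(w₂),
ℓ(w₂) < ℓ(w₁) < ℓ(w₃) and (w₁, w₃) ∉ E. -/
theorem stmt9 {V : Type*} [Fintype V] (G : SimpleGraph V)
    (ℓ : V ≃ Fin (Fintype.card V)) (p : List V)
    (hk : 4 ≤ p.length) (hcc : IsChordlessCycleL G p) :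
    ∃ q : List V, (∃ i, q = p.rotate i ∨ q = (p.rotate i).reverse) ∧
      ∃ h : 3 ≤ q.length,
        (∀ v ∈ p, ℓ (q.get ⟨1, by omega⟩) ≤ ℓ v) ∧
        ℓ (q.get ⟨0, by omega⟩) < ℓ (q.get ⟨2, by omega⟩) ∧
        G.Adj (q.get ⟨1, by omega⟩) (q.get ⟨0, by omega⟩) ∧
        G.Adj (q.get ⟨1, by omega⟩) (q.get ⟨2, by omega⟩) ∧
        ℓ (q.get ⟨1, by omega⟩) < ℓ (q.get ⟨0, by omega⟩) ∧
        ¬ G.Adj (q.get ⟨0, by omega⟩) (q.get ⟨2, by omega⟩) := by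
  obtain ⟨x, u, y, r, hrot, hmin, hux, huy, hux_lt, hxy_lt, hxy⟩ :=
    stmt9_general G ℓ p ℓ.injective.injOn hk hcc
  exact ⟨x :: u :: y :: r, hrot, by simp, hmin, hxy_lt, hux, huy, hux_lt, hxy⟩
end
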